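/- Let γ > 0, let S be a finite set with |S| ≥ 2, and let P : S → ℝ satisfy P(x) > 0 for all x ∈ S and ∑_{x∈S} P(x) = 1. Suppose α > 0 and Q* : S → ℝ satisfy 0 < Q*(x) < 1, L'_γ(Q*(x)) = -α/P(x) for all x ∈ S, and ∑_{x∈S} Q*(x) = 1. Let p_min = min_{x∈S} P(x) and assume γ > κ(p_min). Then P majorizes Q*: for every subset A ⊆ S such that P(x) ≥ P(y) for all x ∈ A and y ∈ S∖A, one has ∑_{x∈A} Q*(x) ≤ ∑_{x∈A} P(x). -/

import Mathlib

/-- The closed form of the first derivative of the focal-loss,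
`L'_γ(p) = -(1-p)^(γ-1) (γ log(1/p) + (1-p)/p)`. -/
noncomputable def focalLossDeriv (γ p : ℝ) : ℝ :=
  -((1 - p) ^ (γ - 1) * (γ * Real.log (1 / p) + (1 - p) / p))

/-- `κ(p) = 1/p − 2(1-p)/(p log(1/p))`. -/
noncomputable def kappaFn (p : ℝ) : ℝ :=
  1 / p - 2 * (1 - p) / (p * Real.log (1 / p))

/-!
The condition on `Q*` says that `P x * L'_γ(Q* x)` is independent of `x`. Since `L'_γ` is negative
and strictly increasing on `(0, 1)`, the value `Q* x` increases with `P x`. Moreover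
`d/dq (q * L'_γ(q)) = γ (1 - q) ^ (γ - 2) q log(1/q) (γ - κ(q))` and `κ` is decreasing, so
`q * L'_γ(q)` is increasing on `[p_min, 1)`. If some `Q* x` were below `p_min`, the two
monotonicities would give `Q* < P` everywhere, contradicting equality of the total masses; hence all
`Q* x` lie in `[p_min, 1)`. There the ratio `P x / Q* x`, which is inversely proportional to
`-Q* x * L'_γ(Q* x)`, increases with `P x`, so once `P x < Q* x` for some `x ∈ A`, also
`P y ≤ Q* y` for every `y ∉ A`, and the bound on `A` follows by comparing the complements.
-/

open Set

lemma sum_le_sum_of_forall_lt_imp_forall_le {ι M : Type*} [Fintype ι] [AddCommMonoid M]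
    [LinearOrder M] [IsOrderedCancelAddMonoid M] {f g : ι → M} (hfg : ∑ x, f x ≤ ∑ x, g x)
    {A : Finset ι} (hA : ∀ x ∈ A, g x < f x → ∀ y ∉ A, g y ≤ f y) :
    ∑ x ∈ A, f x ≤ ∑ x ∈ A, g x := by
  classical
  by_cases hle : ∀ x ∈ A, f x ≤ g x
  · exact Finset.sum_le_sum hle
  · push Not at hle
    obtain ⟨x, hxA, hx⟩ := hle
    have hcompl : ∑ y ∈ Aᶜ, g y ≤ ∑ y ∈ Aᶜ, f y :=
      Finset.sum_le_sum fun y hy => hA x hxA hx y (Finset.mem_compl.1 hy)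
    rw [← Finset.sum_add_sum_compl A f, ← Finset.sum_add_sum_compl A g] at hfg
    exact le_of_add_le_add_right (hfg.trans (add_le_add_right hcompl _))

lemma exp_neg_le_one_sub_add_sq_div_two {x : ℝ} (hx : 0 ≤ x) :
    Real.exp (-x) ≤ 1 - x + x ^ 2 / 2 := by
  have hquad : 0 < 1 - x + x ^ 2 / 2 := by nlinarith [sq_nonneg (x - 1)]
  rw [Real.exp_neg, inv_le_iff_one_le_mul₀ (Real.exp_pos x)]
  calc
    1 ≤ 1 + x ^ 4 / 4 := by linarith [show 0 ≤ x ^ 4 by positivity]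
    _ = (1 - x + x ^ 2 / 2) * (1 + x + x ^ 2 / 2) := by ring
    _ ≤ (1 - x + x ^ 2 / 2) * Real.exp x := by
      gcongr
      exact Real.quadratic_le_exp_of_nonneg hx

lemma rpow_sub_one_eq_rpow_sub_two_mul {x s : ℝ} (hx : x ≠ 0) :
    x ^ (s - 1) = x ^ (s - 2) * x := by
  rw [← Real.rpow_add_one hx]
  ring_nf

lemma log_one_div_pos {q : ℝ} (hq : q ∈ Ioo 0 1) : 0 < Real.log (1 / q) :=
  Real.log_pos ((one_lt_div hq.1).2 hq.2)

lemma log_one_div_le_one_sub_div {q : ℝ} (hq : 0 < q) : Real.log (1 / q) ≤ (1 - q) / q := by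
  rw [sub_div, div_self hq.ne']
  exact Real.log_le_sub_one_of_pos (one_div_pos.2 hq)

lemma hasDerivAt_log_one_div {q : ℝ} (hq : q ≠ 0) :
    HasDerivAt (fun x => Real.log (1 / x)) (-q⁻¹) q := by
  simpa using (Real.hasDerivAt_log hq).fun_neg

lemma hasDerivAt_kappaFn {p : ℝ} (hp : p ∈ Ioo 0 1) :
    HasDerivAt kappaFn
      ((2 * (Real.log (1 / p) - (1 - p)) - Real.log (1 / p) ^ 2) / (p * Real.log (1 / p)) ^ 2)
      p := by
  have hp0 : p ≠ 0 := hp.1.ne'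
  have hlog : Real.log (1 / p) ≠ 0 := (log_one_div_pos hp).ne'
  have hnum := ((hasDerivAt_id p).const_sub 1).const_mul 2
  have hden := (hasDerivAt_id p).mul (hasDerivAt_log_one_div hp0)
  refine (((hasDerivAt_const p 1).div (hasDerivAt_id p) hp0).sub
    (hnum.div hden (mul_ne_zero hp0 hlog))).congr_deriv ?_
  simp only [id, Pi.mul_apply]
  field_simp
  ring

lemma antitoneOn_kappaFn : AntitoneOn kappaFn (Ioo 0 1) := by
  refine antitoneOn_of_hasDerivWithinAt_nonpos (convex_Ioo 0 1)
    (fun p hp => (hasDerivAt_kappaFn hp).continuousAt.continuousWithinAt)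
    (fun p hp => (hasDerivAt_kappaFn (interior_subset hp)).hasDerivWithinAt) fun p hp => ?_
  replace hp : p ∈ Ioo (0 : ℝ) 1 := interior_subset hp
  have hbound : p ≤ 1 - Real.log (1 / p) + Real.log (1 / p) ^ 2 / 2 := by
    simpa [Real.exp_log hp.1] using exp_neg_le_one_sub_add_sq_div_two (log_one_div_pos hp).le
  exact div_nonpos_of_nonpos_of_nonneg (by linarith) (sq_nonneg _)

section FocalLoss

variable {γ p q r a b : ℝ}

lemma hasDerivAt_focalLossDeriv (hq : q ∈ Ioo 0 1) :
    HasDerivAt (focalLossDeriv γ)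
      ((1 - q) ^ (γ - 2) * (γ ^ 2 * Real.log (1 / q)
        + γ * (2 * ((1 - q) / q) - Real.log (1 / q)) + ((1 - q) / q) ^ 2)) q := by
  have hq0 : q ≠ 0 := hq.1.ne'
  have hsub : 0 < 1 - q := sub_pos.2 hq.2
  have hone_sub : HasDerivAt (fun x : ℝ => 1 - x) (-1) q := (hasDerivAt_id q).const_sub 1
  have hpow := hone_sub.rpow_const (p := γ - 1) (Or.inl hsub.ne')
  have hsum := ((hasDerivAt_log_one_div hq0).const_mul γ).add
    (hone_sub.div (hasDerivAt_id q) hq0)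
  refine (hpow.mul hsum).neg.congr_deriv ?_
  simp only [Pi.add_apply, Pi.div_apply, id, rpow_sub_one_eq_rpow_sub_two_mul hsub.ne',
    show γ - 1 - 1 = γ - 2 by ring]
  field_simp
  ring

lemma hasDerivAt_mul_focalLossDeriv (hq : q ∈ Ioo 0 1) :
    HasDerivAt (fun x => x * focalLossDeriv γ x)
      (γ * (1 - q) ^ (γ - 2) * (q * Real.log (1 / q)) * (γ - kappaFn q)) q := by
  have hq0 : q ≠ 0 := hq.1.ne'
  have hlog : Real.log (1 / q) ≠ 0 := (log_one_div_pos hq).ne'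
  have hsub : 0 < 1 - q := sub_pos.2 hq.2
  refine ((hasDerivAt_id q).mul (hasDerivAt_focalLossDeriv hq)).congr_deriv ?_
  simp only [id, focalLossDeriv, kappaFn, rpow_sub_one_eq_rpow_sub_two_mul hsub.ne']
  field_simp
  ring

lemma focalLossDeriv_neg (hγ : 0 ≤ γ) (hq : q ∈ Ioo 0 1) : focalLossDeriv γ q < 0 := by
  have hlog := log_one_div_pos hq
  have hsub : 0 < 1 - q := sub_pos.2 hq.2
  have hq0 := hq.1
  exact neg_neg_of_pos (by positivity)

lemma strictMonoOn_focalLossDeriv (hγ : 0 ≤ γ) : StrictMonoOn (focalLossDeriv γ) (Ioo 0 1) := by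
  refine strictMonoOn_of_hasDerivWithinAt_pos (convex_Ioo 0 1)
    (fun q hq => (hasDerivAt_focalLossDeriv hq).continuousAt.continuousWithinAt)
    (fun q hq => (hasDerivAt_focalLossDeriv (interior_subset hq)).hasDerivWithinAt) fun q hq => ?_
  replace hq : q ∈ Ioo (0 : ℝ) 1 := interior_subset hq
  have hlog := log_one_div_pos hq
  have hsub : 0 < 1 - q := sub_pos.2 hq.2
  have hratio : 0 < (1 - q) / q := div_pos hsub hq.1
  have hgap : 0 ≤ 2 * ((1 - q) / q) - Real.log (1 / q) := by
    linarith [log_one_div_le_one_sub_div hq.1]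
  positivity

lemma monotoneOn_mul_focalLossDeriv (hγ : 0 ≤ γ) (hp : 0 < p) (hκ : kappaFn p ≤ γ) :
    MonotoneOn (fun q => q * focalLossDeriv γ q) (Ico p 1) := by
  have hIoo : Ico p 1 ⊆ Ioo 0 1 := fun q hq => ⟨hp.trans_le hq.1, hq.2⟩
  refine monotoneOn_of_hasDerivWithinAt_nonneg (convex_Ico p 1)
    (fun q hq => (hasDerivAt_mul_focalLossDeriv (hIoo hq)).continuousAt.continuousWithinAt)
    (fun q hq => (hasDerivAt_mul_focalLossDeriv (hIoo (interior_subset hq))).hasDerivWithinAt)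
    fun q hq => ?_
  replace hq : q ∈ Ico p 1 := interior_subset hq
  have hκq : kappaFn q ≤ γ :=
    (antitoneOn_kappaFn ⟨hp, hq.1.trans_lt hq.2⟩ (hIoo hq) hq.1).trans hκ
  have hlog := log_one_div_pos (hIoo hq)
  have hsub : 0 < 1 - q := sub_pos.2 hq.2
  have hq0 : 0 < q := (hIoo hq).1
  exact mul_nonneg (by positivity) (sub_nonneg.2 hκq)

lemma le_of_mul_focalLossDeriv_eq (hγ : 0 ≤ γ) (ha : 0 < a) (hab : a ≤ b)
    (hq : q ∈ Ioo 0 1) (hr : r ∈ Ioo 0 1)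
    (h : a * focalLossDeriv γ q = b * focalLossDeriv γ r) : q ≤ r := by
  refine ((strictMonoOn_focalLossDeriv hγ).le_iff_le hq hr).1 (le_of_mul_le_mul_left ?_ ha)
  exact h.trans_le (mul_le_mul_of_nonpos_right hab (focalLossDeriv_neg hγ hr).le)

lemma lt_of_mul_focalLossDeriv_eq_of_lt (hγ : 0 ≤ γ) (hp : 0 < p) (hκ : kappaFn p ≤ γ)
    (hq : q ∈ Ico p 1) (hr : r ∈ Ico p 1) (hrq : r ≤ q)
    (h : a * focalLossDeriv γ q = b * focalLossDeriv γ r) (haq : a < q) : b < r := by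
  have hq' : focalLossDeriv γ q < 0 := focalLossDeriv_neg hγ ⟨hp.trans_le hq.1, hq.2⟩
  have hr' : focalLossDeriv γ r < 0 := focalLossDeriv_neg hγ ⟨hp.trans_le hr.1, hr.2⟩
  refine (mul_lt_mul_right_of_neg hr').1 ?_
  calc
    r * focalLossDeriv γ r ≤ q * focalLossDeriv γ q :=
      monotoneOn_mul_focalLossDeriv hγ hp hκ hr hq hrq
    _ < a * focalLossDeriv γ q := mul_lt_mul_of_neg_right haq hq'
    _ = b * focalLossDeriv γ r := h

lemma lt_of_mul_focalLossDeriv_eq_of_lt_lowerBound (hγ : 0 ≤ γ) (hκ : kappaFn p ≤ γ)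
    (hpa : p ≤ a) (hpb : p ≤ b) (hq : q ∈ Ioo 0 1) (hr : r ∈ Ioo 0 1)
    (h : a * focalLossDeriv γ q = b * focalLossDeriv γ r) (hqp : q < p) : r < b := by
  rcases lt_or_ge r p with hrp | hpr
  · exact hrp.trans_le hpb
  have hp : p ∈ Ioo 0 1 := ⟨hq.1.trans hqp, hpr.trans_lt hr.2⟩
  refine (mul_lt_mul_right_of_neg (focalLossDeriv_neg hγ hr)).1 ?_
  calc
    b * focalLossDeriv γ r = a * focalLossDeriv γ q := h.symm
    _ ≤ p * focalLossDeriv γ q := mul_le_mul_of_nonpos_right hpa (focalLossDeriv_neg hγ hq).le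
    _ < p * focalLossDeriv γ p :=
      mul_lt_mul_of_pos_left (strictMonoOn_focalLossDeriv hγ hq hp hqp) hp.1
    _ ≤ r * focalLossDeriv γ r :=
      monotoneOn_mul_focalLossDeriv hγ hp.1 hκ ⟨le_rfl, hp.2⟩ ⟨hpr, hr.2⟩ hpr

lemma lowerBound_le_of_mul_focalLossDeriv_eq {ι : Type*} [Fintype ι] {P Q : ι → ℝ}
    (hγ : 0 ≤ γ) (hκ : kappaFn p ≤ γ) (hpP : ∀ x, p ≤ P x) (hQ : ∀ x, Q x ∈ Ioo 0 1)
    (h : ∀ x y, P x * focalLossDeriv γ (Q x) = P y * focalLossDeriv γ (Q y))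
    (hsum : ∑ x, P x ≤ ∑ x, Q x) (x : ι) : p ≤ Q x := by
  by_contra! hx
  have hlt : ∀ y, Q y < P y := fun y =>
    lt_of_mul_focalLossDeriv_eq_of_lt_lowerBound hγ hκ (hpP x) (hpP y) (hQ x) (hQ y) (h x y) hx
  exact hsum.not_gt (Finset.sum_lt_sum_of_nonempty ⟨x, Finset.mem_univ x⟩ fun y _ => hlt y)

end FocalLoss

theorem focalEntropy_minimizer_majorized_general {ι : Type*} [Fintype ι] {γ α p : ℝ}
    (hγ : 0 ≤ γ) {P Q : ι → ℝ} (hp : 0 < p) (hpP : ∀ x, p ≤ P x)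
    (hQ : ∀ x, 0 < Q x ∧ Q x < 1 ∧ focalLossDeriv γ (Q x) = -α / P x)
    (hsum : ∑ x, Q x = ∑ x, P x) (hκ : kappaFn p ≤ γ) {A : Finset ι}
    (hA : ∀ x ∈ A, ∀ y, y ∉ A → P y ≤ P x) : ∑ x ∈ A, Q x ≤ ∑ x ∈ A, P x := by
  have hP : ∀ x, 0 < P x := fun x => hp.trans_le (hpP x)
  have hQ01 : ∀ x, Q x ∈ Ioo 0 1 := fun x => ⟨(hQ x).1, (hQ x).2.1⟩
  have hmul : ∀ x, P x * focalLossDeriv γ (Q x) = -α := fun x => by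
    rw [(hQ x).2.2, mul_div_cancel₀ _ (hP x).ne']
  have hlink : ∀ x y, P x * focalLossDeriv γ (Q x) = P y * focalLossDeriv γ (Q y) :=
    fun x y => (hmul x).trans (hmul y).symm
  have hpQ : ∀ x, Q x ∈ Ico p 1 := fun x =>
    ⟨lowerBound_le_of_mul_focalLossDeriv_eq hγ hκ hpP hQ01 hlink hsum.ge x, (hQ01 x).2⟩
  refine sum_le_sum_of_forall_lt_imp_forall_le hsum.le fun x hx hPQ y hy => ?_
  have hQyx : Q y ≤ Q x :=
    le_of_mul_focalLossDeriv_eq hγ (hP y) (hA x hx y hy) (hQ01 y) (hQ01 x) (hlink y x)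
  exact (lt_of_mul_focalLossDeriv_eq_of_lt hγ hp hκ (hpQ x) (hpQ y) hQyx (hlink x y) hPQ).le

/-- if `γ > κ(p_min)`, then `P` majorizes the focal-entropy
minimizer `Q*`: for every "upper" subset `A` (every element of `A` has `P`-mass at
least that of every element outside `A`), `∑_{x∈A} Q* x ≤ ∑_{x∈A} P x`. -/
theorem focalEntropy_minimizer_majorized
    {ι : Type*} [Fintype ι] [Nonempty ι] (hcard : 2 ≤ Fintype.card ι)
    (γ : ℝ) (hγ : 0 < γ)
    (P : ι → ℝ) (hP : ∀ x, 0 < P x) (hPsum : ∑ x, P x = 1)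
    (α : ℝ) (hα : 0 < α)
    (Qstar : ι → ℝ)
    (hQstar : ∀ x, 0 < Qstar x ∧ Qstar x < 1 ∧
      focalLossDeriv γ (Qstar x) = -α / P x)
    (hQstarsum : ∑ x, Qstar x = 1)
    (hγκ : kappaFn (Finset.univ.inf' Finset.univ_nonempty P) < γ) :
    ∀ A : Finset ι, (∀ x ∈ A, ∀ y, y ∉ A → P y ≤ P x) →
      ∑ x ∈ A, Qstar x ≤ ∑ x ∈ A, P x := by
  intro A hA
  exact focalEntropy_minimizer_majorized_general hγ.le
    ((Finset.lt_inf'_iff _).2 fun x _ => hP x) (fun x => Finset.inf'_le P (Finset.mem_univ x))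
    hQstar (hQstarsum.trans hPsum.symm) hγκ.le hA
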